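/- Assume A is standardized and let x⁰ ∈ range(Aᵀ). For each sequence s = (i_0,…,i_{k−1}) ∈ {1,…,m}^k define iterates by x⁰_s = x⁰ and x^{j+1}_s = x^j_s − (A^{(i_j)}x^j_s − b_{i_j})·(A^{(i_j)})ᵀ for 0 ≤ j < k. Then (1/m^k) Σ_{s ∈ {1,…,m}^k} ‖x^k_s − x⋆‖₂² ≤ (1 − λ_min⁺(AᵀA)/m)^k · ‖x⁰ − x⋆‖₂². -/

import Mathlib

open Matrix Finset

/-- The largest eigenvalue of a square real matrix (as the supremum of its
eigenvalue set). -/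
noncomputable def maxEig {k : ℕ} (M : Matrix (Fin k) (Fin k) ℝ) : ℝ :=
  sSup {μ : ℝ | Module.End.HasEigenvalue (Matrix.mulVecLin M) μ}

/-- The smallest positive eigenvalue of a square real matrix. -/
noncomputable def minPosEig {k : ℕ} (M : Matrix (Fin k) (Fin k) ℝ) : ℝ :=
  sInf {μ : ℝ | Module.End.HasEigenvalue (Matrix.mulVecLin M) μ ∧ 0 < μ}

/-- The restriction of `A` to the rows indexed by `I`. -/
def rowSub {m n : ℕ} (A : Matrix (Fin m) (Fin n) ℝ) (I : Finset (Fin m)) :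
    Matrix {i : Fin m // i ∈ I} (Fin n) ℝ :=
  fun i j => A i.1 j

/-- Squared Euclidean norm. -/
noncomputable def sqNorm {k : ℕ} (v : Fin k → ℝ) : ℝ := ∑ j, (v j) ^ 2

/-- `xp` is the exact block Kaczmarz update of `x` with respect to the row
index set `I`: it satisfies the equations indexed by `I` and minimizes the
distance to `x` among all such points (hence is the orthogonal projection of
`x` onto the affine solution set, which is the unique such minimizer). -/
def IsKaczmarzUpdate {m n : ℕ} (A : Matrix (Fin m) (Fin n) ℝ)
    (b : Fin m → ℝ) (I : Finset (Fin m)) (x xp : Fin n → ℝ) : Prop :=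
  (∀ i ∈ I, A i ⬝ᵥ xp = b i) ∧
  ∀ y : Fin n → ℝ, (∀ i ∈ I, A i ⬝ᵥ y = b i) → sqNorm (xp - x) ≤ sqNorm (y - x)

/-- `I` is a greedy `δ`-subset of `τ` for `x`: `I ⊆ τ`, `|I| = δ`, and the
residual entries on `I` dominate (in absolute value) those on `τ \ I`. -/
def IsGreedySubset {m n : ℕ} (A : Matrix (Fin m) (Fin n) ℝ) (b : Fin m → ℝ)
    (x : Fin n → ℝ) (δ : ℕ) (τ I : Finset (Fin m)) : Prop :=
  I ⊆ τ ∧ I.card = δ ∧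
    ∀ i ∈ I, ∀ j ∈ τ \ I, |A j ⬝ᵥ x - b j| ≤ |A i ⬝ᵥ x - b i|

/-- The randomized-Kaczmarz iterates along a finite sequence of row indices:
`rkIterate A b x0 k s` is the result of applying, starting from `x0`, the
single-row Kaczmarz updates with rows `s 0, s 1, …, s (k-1)` in order. -/
noncomputable def rkIterate {m n : ℕ} (A : Matrix (Fin m) (Fin n) ℝ)
    (b : Fin m → ℝ) (x0 : Fin n → ℝ) : (k : ℕ) → (Fin k → Fin m) → (Fin n → ℝ)
  | 0, _ => x0
  | k + 1, s =>
      let xk := rkIterate A b x0 k (fun j => s j.castSucc)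
      fun j => xk j - (A (s (Fin.last k)) ⬝ᵥ xk - b (s (Fin.last k))) * A (s (Fin.last k)) j

/-- Parseval's identity for the eigenvector basis of a Hermitian real matrix. -/
theorem sum_dotProduct_eigenvectorBasis_mul {n : ℕ} {M : Matrix (Fin n) (Fin n) ℝ}
    (hM : M.IsHermitian) (x y : Fin n → ℝ) :
    ∑ i, ((hM.eigenvectorBasis i).ofLp ⬝ᵥ x) * ((hM.eigenvectorBasis i).ofLp ⬝ᵥ y) =
      x ⬝ᵥ y := by
  have h := hM.eigenvectorBasis.sum_inner_mul_inner (WithLp.toLp 2 x) (WithLp.toLp 2 y)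
  simp only [EuclideanSpace.inner_eq_star_dotProduct, star_trivial] at h
  rw [dotProduct_comm x y, ← h]
  exact Finset.sum_congr rfl fun i _ => by rw [dotProduct_comm _ y]

theorem sqNorm_eq_dotProduct {k : ℕ} (v : Fin k → ℝ) : sqNorm v = v ⬝ᵥ v := by
  simp [sqNorm, dotProduct, sq]

theorem sqNorm_nonneg {k : ℕ} (v : Fin k → ℝ) : 0 ≤ sqNorm v :=
  Finset.sum_nonneg fun _ _ => sq_nonneg _

theorem minPosEig_le {n : ℕ} {M : Matrix (Fin n) (Fin n) ℝ} {μ : ℝ} {v : Fin n → ℝ}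
    (hv : v ≠ 0) (hMv : M *ᵥ v = μ • v) (hμ : 0 < μ) : minPosEig M ≤ μ := by
  refine csInf_le ⟨0, fun _ h => h.2.le⟩ ⟨?_, hμ⟩
  exact Module.End.hasEigenvalue_of_hasEigenvector
    ⟨Module.End.mem_eigenspace_iff.mpr hMv, hv⟩

/-- On the row space of `A`, the smallest positive eigenvalue of `Aᵀ * A` bounds the
Rayleigh quotient from below. -/
theorem minPosEig_mul_sqNorm_le {m n : ℕ} (A : Matrix (Fin m) (Fin n) ℝ) {v : Fin n → ℝ}
    (hv : v ∈ Set.range Aᵀ.mulVec) :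
    minPosEig (Aᵀ * A) * sqNorm v ≤ sqNorm (A *ᵥ v) := by
  obtain ⟨w, rfl⟩ := hv
  set v := Aᵀ *ᵥ w with hv
  have hM : (Aᵀ * A).IsHermitian := by
    simpa using Matrix.isHermitian_conjTranspose_mul_self A
  have hadj (x : Fin n → ℝ) (y : Fin m → ℝ) : x ⬝ᵥ (Aᵀ *ᵥ y) = (A *ᵥ x) ⬝ᵥ y := by
    rw [dotProduct_mulVec, vecMul_transpose]
  have hsq (x : Fin n → ℝ) : x ⬝ᵥ ((Aᵀ * A) *ᵥ x) = sqNorm (A *ᵥ x) := by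
    rw [← mulVec_mulVec, hadj, sqNorm_eq_dotProduct]
  rw [← hsq, sqNorm_eq_dotProduct, ← sum_dotProduct_eigenvectorBasis_mul hM v v,
    ← sum_dotProduct_eigenvectorBasis_mul hM v ((Aᵀ * A) *ᵥ v), Finset.mul_sum]
  refine Finset.sum_le_sum fun i _ => ?_
  set u : Fin n → ℝ := (hM.eigenvectorBasis i).ofLp
  have hMu : (Aᵀ * A) *ᵥ u = hM.eigenvalues i • u := hM.mulVec_eigenvectorBasis i
  have hu0 : u ≠ 0 := fun h => hM.eigenvectorBasis.orthonormal.ne_zero i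
    ((WithLp.ofLp_eq_zero 2).mp h)
  have hMv : u ⬝ᵥ ((Aᵀ * A) *ᵥ v) = hM.eigenvalues i * (u ⬝ᵥ v) := by
    rw [← mulVec_mulVec, hadj, dotProduct_comm, ← hadj, mulVec_mulVec, hMu, dotProduct_smul,
      smul_eq_mul, dotProduct_comm v u]
  have hnonneg : 0 ≤ hM.eigenvalues i := by
    have hpsd : (Aᵀ * A).PosSemidef := by
      simpa using Matrix.posSemidef_conjTranspose_mul_self A
    exact hpsd.eigenvalues_nonneg i
  rw [hMv]
  rcases hnonneg.eq_or_lt with h0 | hpos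
  · have hAu : A *ᵥ u = 0 := by
      have h := hsq u
      rw [hMu, ← h0, zero_smul, dotProduct_zero, sqNorm_eq_dotProduct] at h
      exact dotProduct_self_eq_zero.mp h.symm
    have huv : u ⬝ᵥ v = 0 := by rw [hv, hadj, hAu, zero_dotProduct]
    simp [huv]
  · nlinarith [mul_le_mul_of_nonneg_right (minPosEig_le hu0 hMu hpos)
      (mul_self_nonneg (u ⬝ᵥ v))]

/-- The squared error after one Kaczmarz step, by Pythagoras. -/
theorem sqNorm_kaczmarz_step {n : ℕ} (a e : Fin n → ℝ) (ha : a ⬝ᵥ a = 1) :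
    sqNorm (e - (a ⬝ᵥ e) • a) = sqNorm e - (a ⬝ᵥ e) ^ 2 := by
  simp only [sqNorm_eq_dotProduct, sub_dotProduct, dotProduct_sub, smul_dotProduct,
    dotProduct_smul, smul_eq_mul, ha, dotProduct_comm e a]
  ring

theorem row_mem_range_transpose_mulVec {m n : ℕ} (A : Matrix (Fin m) (Fin n) ℝ) (i : Fin m) :
    A i ∈ Set.range Aᵀ.mulVec :=
  ⟨Pi.single i 1, by ext j; simp⟩

theorem rkIterate_succ_sub {m n : ℕ} (A : Matrix (Fin m) (Fin n) ℝ) (xstar x0 : Fin n → ℝ)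
    (k : ℕ) (s : Fin k → Fin m) (i : Fin m) :
    rkIterate A (A *ᵥ xstar) x0 (k + 1) (Fin.snoc s i) - xstar =
      (rkIterate A (A *ᵥ xstar) x0 k s - xstar) -
        (A i ⬝ᵥ (rkIterate A (A *ᵥ xstar) x0 k s - xstar)) • A i := by
  ext j
  simp only [rkIterate, Fin.snoc_castSucc, Fin.snoc_last, Pi.sub_apply, Pi.smul_apply,
    dotProduct_sub, smul_eq_mul, mulVec]
  ring

theorem rkIterate_sub_mem_range {m n : ℕ} (A : Matrix (Fin m) (Fin n) ℝ)
    {xstar x0 : Fin n → ℝ} (h : x0 - xstar ∈ Set.range Aᵀ.mulVec) (k : ℕ)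
    (s : Fin k → Fin m) :
    rkIterate A (A *ᵥ xstar) x0 k s - xstar ∈ Set.range Aᵀ.mulVec := by
  induction k with
  | zero => exact h
  | succ k ih =>
    rw [← Fin.snoc_init_self s, rkIterate_succ_sub]
    obtain ⟨y, hy⟩ := ih (Fin.init s)
    obtain ⟨z, hz⟩ := row_mem_range_transpose_mulVec A (s (Fin.last k))
    refine ⟨y - (A (s (Fin.last k)) ⬝ᵥ
      (rkIterate A (A *ᵥ xstar) x0 k (Fin.init s) - xstar)) • z, ?_⟩
    rw [mulVec_sub, mulVec_smul, hy, hz]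

/-- Summed over all rows, one Kaczmarz step contracts the squared error. -/
theorem sum_sqNorm_kaczmarz_step_le {m n : ℕ} (A : Matrix (Fin m) (Fin n) ℝ)
    (hstd : ∀ i, A i ⬝ᵥ A i = 1) {e : Fin n → ℝ} (he : e ∈ Set.range Aᵀ.mulVec) :
    ∑ i, sqNorm (e - (A i ⬝ᵥ e) • A i) ≤ (m - minPosEig (Aᵀ * A)) * sqNorm e := by
  have hsum : ∑ i, sqNorm (e - (A i ⬝ᵥ e) • A i) = m * sqNorm e - sqNorm (A *ᵥ e) := by
    simp only [sqNorm_kaczmarz_step _ e (hstd _), Finset.sum_sub_distrib, Finset.sum_const,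
      Finset.card_univ, Fintype.card_fin, nsmul_eq_mul]
    rfl
  rw [hsum, sub_mul]
  exact sub_le_sub_left (minPosEig_mul_sqNorm_le A he) _

theorem rk_expected_convergence {m n : ℕ}
    (A : Matrix (Fin m) (Fin n) ℝ) (hA : A ≠ 0)
    (hstd : ∀ i : Fin m, ∑ j, (A i j) ^ 2 = 1)
    (b : Fin m → ℝ)
    (xstar : Fin n → ℝ) (hconsistent : A.mulVec xstar = b)
    (hxstar : xstar ∈ Set.range Aᵀ.mulVec)
    (x0 : Fin n → ℝ) (hx0 : x0 ∈ Set.range Aᵀ.mulVec)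
    (k : ℕ) :
    (1 / (m : ℝ) ^ k) *
        ∑ s : Fin k → Fin m, sqNorm (rkIterate A b x0 k s - xstar) ≤
      (1 - minPosEig (Aᵀ * A) / (m : ℝ)) ^ k * sqNorm (x0 - xstar) := by
  subst hconsistent
  have hrow : ∀ i, A i ⬝ᵥ A i = 1 := fun i => by
    rw [← hstd i]; simp [dotProduct, sq]
  obtain ⟨i₀⟩ : Nonempty (Fin m) := by
    by_contra h
    rw [not_nonempty_iff] at h
    exact hA (Subsingleton.elim _ _)
  have hm : (0 : ℝ) < m := by exact_mod_cast i₀.pos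
  have he : x0 - xstar ∈ Set.range Aᵀ.mulVec := by
    obtain ⟨y, rfl⟩ := hx0
    obtain ⟨z, rfl⟩ := hxstar
    exact ⟨y - z, mulVec_sub _ _ _⟩
  have hfac : 0 ≤ m - minPosEig (Aᵀ * A) := by
    have h := sum_sqNorm_kaczmarz_step_le A hrow (row_mem_range_transpose_mulVec A i₀)
    rw [sqNorm_eq_dotProduct (A i₀), hrow, mul_one] at h
    exact (Finset.sum_nonneg fun _ _ => sqNorm_nonneg _).trans h
  have hbound : ∑ s : Fin k → Fin m, sqNorm (rkIterate A (A *ᵥ xstar) x0 k s - xstar) ≤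
      (m - minPosEig (Aᵀ * A)) ^ k * sqNorm (x0 - xstar) := by
    induction k with
    | zero => simp [rkIterate]
    | succ k ih =>
      rw [← (Fin.snocEquiv fun _ => Fin m).sum_comp, Fintype.sum_prod_type_right]
      calc _ = ∑ s : Fin k → Fin m, ∑ i,
              sqNorm ((rkIterate A (A *ᵥ xstar) x0 k s - xstar) -
                (A i ⬝ᵥ (rkIterate A (A *ᵥ xstar) x0 k s - xstar)) • A i) :=
            Finset.sum_congr rfl fun s _ => Finset.sum_congr rfl fun i _ =>
              congrArg sqNorm (rkIterate_succ_sub A xstar x0 k s i)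
        _ ≤ ∑ s : Fin k → Fin m, (m - minPosEig (Aᵀ * A)) *
              sqNorm (rkIterate A (A *ᵥ xstar) x0 k s - xstar) :=
            Finset.sum_le_sum fun s _ =>
              sum_sqNorm_kaczmarz_step_le A hrow (rkIterate_sub_mem_range A he k s)
        _ ≤ (m - minPosEig (Aᵀ * A)) *
              ((m - minPosEig (Aᵀ * A)) ^ k * sqNorm (x0 - xstar)) := by
            rw [← Finset.mul_sum]
            exact mul_le_mul_of_nonneg_left ih hfac
        _ = _ := by ring
  have hdiv : 1 - minPosEig (Aᵀ * A) / m = (m - minPosEig (Aᵀ * A)) / m := by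
    field_simp
  rw [hdiv, div_pow, one_div_mul_eq_div, div_mul_eq_mul_div]
  exact div_le_div_of_nonneg_right hbound (by positivity)
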